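/- arXiv:1408.2170 — 6 statements merged into one kernel-verified Lean document; each statement's English description precedes it below -/
import Mathlib

section
/- There exists a symmetric matrix R : Matrix (Fin 3) (Fin 3) ℝ such that for the metric-form tensor V = V_R each of the following quadratic covariants has some nonzero component: A V a b := ∑_{p,q} V a p q * V b q p; N V a b c d := Sym_{abc}( 5 * ∑_p V a b p * V c p d − 2 * A V a b * (if c = d then 1 else 0) ); Z V a b c d := Sym_{abcd} ∑_{p,q,r,s} ε p r a * V p q b * V r s c * ε d q s; and Y V a b c d e f := Sym_{abcd} Sym_{ef}( 105 * V a b e * V c d f − 12 * N V a b c e * (if d = f then 1 else 0) − 14 * A V a b * (if c = e then 1 else 0) * (if d = f then 1 else 0) ). (This is the nontrivial part of the Proposition that, of the five quadratic covariants A, N, Q, Y, Z of V^{ab}{}_c, only Q vanishes in the metrisable case.) -/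
/-!
Take `R` diagonal with diagonal `(0, 1, 2)`. Then `V_R a b c = (R b b - R a a) * ε a b c`, so each
covariant can be tested on the component all of whose indices are `0`, where symmetrisation does
nothing. Since `V_R 0 0 c = 0`, only the trace terms survive in `N` and `Y`:
`N 0000 = -2 * A 00` and `Y 000000 = -12 * N 0000 - 14 * A 00 = 10 * A 00`.
Finally `A 00 = -2 * (R₁ - R₀) * (R₂ - R₀) = -4` and `Z 0000 = -2 * (R₂ - R₁) ^ 2 = -2`.
-/

noncomputable section

open Finset

/-- The Levi-Civita symbol on `Fin 3`. -/
def eps (a b c : Fin 3) : ℝ :=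
  if (a, b, c) = ((0 : Fin 3), (1 : Fin 3), (2 : Fin 3)) ∨
     (a, b, c) = ((1 : Fin 3), (2 : Fin 3), (0 : Fin 3)) ∨
     (a, b, c) = ((2 : Fin 3), (0 : Fin 3), (1 : Fin 3)) then 1
  else if (a, b, c) = ((0 : Fin 3), (2 : Fin 3), (1 : Fin 3)) ∨
          (a, b, c) = ((2 : Fin 3), (1 : Fin 3), (0 : Fin 3)) ∨
          (a, b, c) = ((1 : Fin 3), (0 : Fin 3), (2 : Fin 3)) then -1
  else 0

/-- The metric-form tensor `V_R a b c = ∑_d (R d a * ε b d c + R d b * ε a d c)`,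
tensorially `V^{ab}{}_c = 2 R^{d(a} ε^{b)}{}_{dc}`. -/
def VR (R : Matrix (Fin 3) (Fin 3) ℝ) (a b c : Fin 3) : ℝ :=
  ∑ d, (R d a * eps b d c + R d b * eps a d c)

/-- A Weyl-type tensor: `V a b c = V b a c` and `∑_a V a b a = 0`. -/
def IsWeyl (V : Fin 3 → Fin 3 → Fin 3 → ℝ) : Prop :=
  (∀ a b c, V a b c = V b a c) ∧ (∀ b, ∑ a, V a b a = 0)

/-- The quadratic obstruction `Q_{ab}{}^c = ε_{pq(a} V^{pr}{}_{b)} V^{qc}{}_r`. -/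
def covQ (V : Fin 3 → Fin 3 → Fin 3 → ℝ) (a b c : Fin 3) : ℝ :=
  (1 / 2) * ∑ p, ∑ q, ∑ r, (eps p q a * V p r b + eps p q b * V p r a) * V q c r

/-- The cubic scalar `S = ε_{abc} V^{ap}{}_q V^{bq}{}_r V^{cr}{}_p`. -/
def covS (V : Fin 3 → Fin 3 → Fin 3 → ℝ) : ℝ :=
  ∑ a, ∑ b, ∑ c, ∑ p, ∑ q, ∑ r, eps a b c * V a p q * V b q r * V c r p

/-- Symmetrisation (average) over two indices. -/
def sym2 (f : Fin 3 → Fin 3 → ℝ) (a b : Fin 3) : ℝ := (1 / 2) * (f a b + f b a)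

/-- Symmetrisation (average) over three indices. -/
def sym3 (f : Fin 3 → Fin 3 → Fin 3 → ℝ) (a b c : Fin 3) : ℝ :=
  (1 / 6) * ∑ π : Equiv.Perm (Fin 3),
    f (![a, b, c] (π 0)) (![a, b, c] (π 1)) (![a, b, c] (π 2))

/-- Symmetrisation (average) over four indices. -/
def sym4 (f : Fin 3 → Fin 3 → Fin 3 → Fin 3 → ℝ) (a b c d : Fin 3) : ℝ :=
  (1 / 24) * ∑ π : Equiv.Perm (Fin 4),
    f (![a, b, c, d] (π 0)) (![a, b, c, d] (π 1)) (![a, b, c, d] (π 2)) (![a, b, c, d] (π 3))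

/-- Symmetrisation (average) over six indices. -/
def sym6 (f : Fin 3 → Fin 3 → Fin 3 → Fin 3 → Fin 3 → Fin 3 → ℝ)
    (a b c d e f' : Fin 3) : ℝ :=
  (1 / 720) * ∑ π : Equiv.Perm (Fin 6),
    f (![a, b, c, d, e, f'] (π 0)) (![a, b, c, d, e, f'] (π 1)) (![a, b, c, d, e, f'] (π 2))
      (![a, b, c, d, e, f'] (π 3)) (![a, b, c, d, e, f'] (π 4)) (![a, b, c, d, e, f'] (π 5))

/-- `A^{ab} = ⊙(V^{ap}{}_q V^{bq}{}_p)`. -/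
def covA (V : Fin 3 → Fin 3 → Fin 3 → ℝ) (a b : Fin 3) : ℝ :=
  ∑ p, ∑ q, V a p q * V b q p

/-- `B^{abc} = ⊙(V^{ap}{}_q V^{bq}{}_r V^{cr}{}_p)`. -/
def covB (V : Fin 3 → Fin 3 → Fin 3 → ℝ) (a b c : Fin 3) : ℝ :=
  sym3 (fun a b c => ∑ p, ∑ q, ∑ r, V a p q * V b q r * V c r p) a b c

/-- `C^{abc} = ⊙(V^{ab}{}_p V^{pq}{}_r V^{cr}{}_q)`. -/
def covC (V : Fin 3 → Fin 3 → Fin 3 → ℝ) (a b c : Fin 3) : ℝ :=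
  sym3 (fun a b c => ∑ p, ∑ q, ∑ r, V a b p * V p q r * V c r q) a b c

/-- `D^{abcd} = ⊙(V^{ab}{}_p V^{pq}{}_r V^{cr}{}_s V^{ds}{}_q)`. -/
def covD (V : Fin 3 → Fin 3 → Fin 3 → ℝ) (a b c d : Fin 3) : ℝ :=
  sym4 (fun a b c d => ∑ p, ∑ q, ∑ r, ∑ s, V a b p * V p q r * V c r s * V d s q) a b c d

/-- `F^{abcd} = ⊙(V^{ab}{}_p V^{cd}{}_q V^{pr}{}_s V^{qs}{}_r)`. -/
def covF (V : Fin 3 → Fin 3 → Fin 3 → ℝ) (a b c d : Fin 3) : ℝ :=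
  sym4 (fun a b c d => ∑ p, ∑ q, ∑ r, ∑ s, V a b p * V c d q * V p r s * V q s r) a b c d

/-- `J^{abcdef} = ⊙(V^{ab}{}_p V^{cd}{}_q V^{pq}{}_r V^{er}{}_s V^{st}{}_u V^{fu}{}_t)`. -/
def covJ (V : Fin 3 → Fin 3 → Fin 3 → ℝ) (a b c d e f : Fin 3) : ℝ :=
  sym6 (fun a b c d e f => ∑ p, ∑ q, ∑ r, ∑ s, ∑ t, ∑ u,
    V a b p * V c d q * V p q r * V e r s * V s t u * V f u t) a b c d e f

/-- `K^{abcdef} = ⊙(V^{ab}{}_p V^{cd}{}_q V^{ep}{}_r V^{fq}{}_s V^{rt}{}_u V^{su}{}_t)`. -/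
def covK (V : Fin 3 → Fin 3 → Fin 3 → ℝ) (a b c d e f : Fin 3) : ℝ :=
  sym6 (fun a b c d e f => ∑ p, ∑ q, ∑ r, ∑ s, ∑ t, ∑ u,
    V a b p * V c d q * V e p r * V f q s * V r t u * V s u t) a b c d e f

/-- `L^{abcdef} = ⊙(V^{ab}{}_p V^{cd}{}_q V^{pq}{}_r V^{rs}{}_t V^{et}{}_u V^{fu}{}_s)`. -/
def covL (V : Fin 3 → Fin 3 → Fin 3 → ℝ) (a b c d e f : Fin 3) : ℝ :=
  sym6 (fun a b c d e f => ∑ p, ∑ q, ∑ r, ∑ s, ∑ t, ∑ u,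
    V a b p * V c d q * V p q r * V r s t * V e t u * V f u s) a b c d e f

/-- The sextic obstruction
`T = 24J + 12K − 24L − 24B⊙B − 24C⊙C + 40B⊙C − 24A⊙D + 6A⊙F`. -/
def covT (V : Fin 3 → Fin 3 → Fin 3 → ℝ) (a b c d e f : Fin 3) : ℝ :=
  24 * covJ V a b c d e f + 12 * covK V a b c d e f - 24 * covL V a b c d e f
    - 24 * sym6 (fun a b c d e f => covB V a b c * covB V d e f) a b c d e f
    - 24 * sym6 (fun a b c d e f => covC V a b c * covC V d e f) a b c d e f
    + 40 * sym6 (fun a b c d e f => covB V a b c * covC V d e f) a b c d e f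
    - 24 * sym6 (fun a b c d e f => covA V a b * covD V c d e f) a b c d e f
    + 6 * sym6 (fun a b c d e f => covA V a b * covF V c d e f) a b c d e f

/-- `N^{abc}{}_d = 5V^{(ab}{}_pV^{c)p}{}_d − 2A^{(ab}δ_d{}^{c)}`. -/
def covN (V : Fin 3 → Fin 3 → Fin 3 → ℝ) (a b c d : Fin 3) : ℝ :=
  sym3 (fun a b c =>
    5 * (∑ p, V a b p * V c p d) - 2 * covA V a b * (if c = d then (1 : ℝ) else 0)) a b c

/-- `Z_{abcd} = ε_{pr(a}V^{pq}{}_bV^{rs}{}_cε_{d)qs}`. -/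
def covZ (V : Fin 3 → Fin 3 → Fin 3 → ℝ) (a b c d : Fin 3) : ℝ :=
  sym4 (fun a b c d => ∑ p, ∑ q, ∑ r, ∑ s, eps p r a * V p q b * V r s c * eps d q s) a b c d

/-- `Y^{abcd}{}_{ef} = 105V^{(ab}{}_{(e}V^{cd)}{}_{f)} − 12N^{(abc}{}_{(e}δ^{d)}{}_{f)}
− 14A^{(ab}δ_{(e}{}^cδ_{f)}{}^{d)}`. -/
def covY (V : Fin 3 → Fin 3 → Fin 3 → ℝ) (a b c d e f : Fin 3) : ℝ :=
  sym4 (fun a b c d => sym2 (fun e f =>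
    105 * V a b e * V c d f - 12 * covN V a b c e * (if d = f then (1 : ℝ) else 0)
      - 14 * covA V a b * (if c = e then (1 : ℝ) else 0) *
          (if d = f then (1 : ℝ) else 0)) e f) a b c d


lemma sym3_diag (f : Fin 3 → Fin 3 → Fin 3 → ℝ) (a : Fin 3) : sym3 f a a a = f a a a := by
  have h : ∀ i : Fin 3, ![a, a, a] i = a := by intro i; fin_cases i <;> rfl
  simp [sym3, h, Fintype.card_perm, Nat.factorial]

lemma sym4_diag (f : Fin 3 → Fin 3 → Fin 3 → Fin 3 → ℝ) (a : Fin 3) :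
    sym4 f a a a a = f a a a a := by
  have h : ∀ i : Fin 4, ![a, a, a, a] i = a := by intro i; fin_cases i <;> rfl
  simp [sym4, h, Fintype.card_perm, Nat.factorial]

lemma VR_diagonal (v : Fin 3 → ℝ) (a b c : Fin 3) :
    VR (Matrix.diagonal v) a b c = (v b - v a) * eps a b c := by
  fin_cases a <;> fin_cases b <;> fin_cases c <;>
    simp [VR, eps, Fin.sum_univ_three, Matrix.diagonal] <;> ring

lemma covA_value : covA (VR (Matrix.diagonal ![0, 1, 2])) 0 0 = -4 := by
  simp [covA, VR_diagonal, eps, Fin.sum_univ_three]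
  norm_num

lemma covN_value : covN (VR (Matrix.diagonal ![0, 1, 2])) 0 0 0 0 = 8 := by
  rw [covN, sym3_diag, covA_value]
  simp [VR_diagonal]
  norm_num

lemma covZ_value : covZ (VR (Matrix.diagonal ![0, 1, 2])) 0 0 0 0 = -2 := by
  rw [covZ, sym4_diag]
  simp [VR_diagonal, eps, Fin.sum_univ_three]
  norm_num

lemma covY_value : covY (VR (Matrix.diagonal ![0, 1, 2])) 0 0 0 0 0 0 = -40 := by
  rw [covY, sym4_diag, sym2, covA_value, covN_value]
  simp [VR_diagonal]
  norm_num

/-- There is a symmetric `R` such that each of the quadratic covariants `A`, `N`, `Z`, `Y`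
of the metric-form tensor `V_R` has a nonzero component. -/
theorem statement12 :
    ∃ R : Matrix (Fin 3) (Fin 3) ℝ, (∀ i j, R i j = R j i) ∧
      (∃ a b, covA (VR R) a b ≠ 0) ∧
      (∃ a b c d, covN (VR R) a b c d ≠ 0) ∧
      (∃ a b c d, covZ (VR R) a b c d ≠ 0) ∧
      (∃ a b c d e f, covY (VR R) a b c d e f ≠ 0) := by
  refine ⟨Matrix.diagonal ![0, 1, 2], fun i j => (Matrix.isSymm_diagonal _).apply j i,
    ⟨0, 0, ?_⟩, ⟨0, 0, 0, 0, ?_⟩, ⟨0, 0, 0, 0, ?_⟩, ⟨0, 0, 0, 0, 0, 0, ?_⟩⟩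
  · rw [covA_value]; norm_num
  · rw [covN_value]; norm_num
  · rw [covZ_value]; norm_num
  · rw [covY_value]; norm_num
end
end

section
/- Let X, Y : Fin 3 → ℝ both be nonzero. Then there is no symmetric matrix R : Matrix (Fin 3) (Fin 3) ℝ such that X a * X b * Y c = V_R a b c for all a, b, c. (This is the algebraic core of the non-metrisability of the Egorov projective structure, whose projective Weyl tensor has the simple form V^{ab}{}_c = X^a X^b Y_c with only nonzero component V^{11}{}_2 = −2: a simple tensor has nonvanishing total symmetrisation X_{(a}X_bY_{c)} ≠ 0, conflicting with the hook symmetry V_{(abc)} = 0 of the metric case.) -/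
/-!
Since `ε b d c` is antisymmetric in `b, c`, the cyclic sum of `V_R` over its three indices vanishes
(`VR_cyclic`). For a simple tensor this reads `X_a X_b Y_c + X_b X_c Y_a + X_c X_a Y_b = 0`.
Fix `i` with `X_i ≠ 0`: the indices `(i, i, i)` give `Y_i = 0`, and then `(i, i, c)` gives
`X_i² Y_c = 0` for every `c`, so `Y = 0`.
-/

noncomputable section

open Finset

theorem eps_swap (a d b : Fin 3) : eps a d b = -eps b d a := by
  fin_cases a <;> fin_cases d <;> fin_cases b <;> simp [eps]

/-- The hook symmetry `V_{(abc)} = 0` of the metric form; as `V_R` is symmetric in its first two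
indices, the cyclic sum suffices. -/
theorem VR_cyclic (R : Matrix (Fin 3) (Fin 3) ℝ) (a b c : Fin 3) :
    VR R a b c + VR R b c a + VR R c a b = 0 := by
  simp only [VR, ← Finset.sum_add_distrib]
  refine Finset.sum_eq_zero fun d _ => ?_
  rw [eps_swap b d c, eps_swap a d c, eps_swap b d a]
  ring

/-- A simple tensor `X^a X^b Y_c` with `X, Y` nonzero is never of metric form `V_R`
(algebraic core of the non-metrisability of the Egorov projective structure). -/
theorem statement14 (X Y : Fin 3 → ℝ) (hX : X ≠ 0) (hY : Y ≠ 0) :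
    ¬ ∃ R : Matrix (Fin 3) (Fin 3) ℝ, (∀ i j, R i j = R j i) ∧
        ∀ a b c, X a * X b * Y c = VR R a b c := by
  rintro ⟨R, -, h⟩
  obtain ⟨i, hi⟩ := Function.ne_iff.mp hX
  have hXi : X i ≠ 0 := hi
  have cyc : ∀ a b c, X a * X b * Y c + X b * X c * Y a + X c * X a * Y b = 0 := by
    intro a b c
    rw [h, h, h, VR_cyclic]
  have hYi : Y i = 0 := by
    have h3 : X i * X i * Y i = 0 := by linarith [cyc i i i]
    simpa [hXi] using h3
  refine hY (funext fun c => ?_)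
  have hc := cyc i i c
  simpa [hYi, hXi] using hc
end
end

section
/- Let V : Fin 3 → Fin 3 → Fin 3 → ℝ be the tensor with V 0 0 1 = −2 and all other components zero (the projective Weyl tensor of the Egorov projective structure, V^{11}{}_2 = −2 in 1-based indices). Suppose σ : Matrix (Fin 3) (Fin 3) ℝ is symmetric and satisfies the algebraic metrisability constraint: for all a, b, c, ∑_d (V a b d * σ c d + V b c d * σ a d + V c a d * σ b d) = 0 (tensorially V^{(ab}{}_d σ^{c)d} = 0). Then σ 0 1 = 0, σ 1 1 = 0, σ 1 2 = 0, and consequently det σ = 0. (Hence every solution of the metrisability equation for the Egorov structure is degenerate, so the Egorov projective structure is not metrisable.) -/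
noncomputable section

open Finset

/-- The projective Weyl tensor of the Egorov structure: `V 0 0 1 = −2`, all else zero. -/
def egorovV : Fin 3 → Fin 3 → Fin 3 → ℝ :=
  fun a b c => if a = 0 ∧ b = 0 ∧ c = 1 then -2 else 0

/-- Every symmetric solution of the algebraic metrisability constraint for the Egorov
structure has `σ 0 1 = σ 1 1 = σ 1 2 = 0` and is therefore degenerate. -/
theorem statement16 (σ : Matrix (Fin 3) (Fin 3) ℝ) (hσ : ∀ i j, σ i j = σ j i)
    (h : ∀ a b c, ∑ d,
      (egorovV a b d * σ c d + egorovV b c d * σ a d + egorovV c a d * σ b d) = 0) :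
    σ 0 1 = 0 ∧ σ 1 1 = 0 ∧ σ 1 2 = 0 ∧ σ.det = 0 := by
  -- The components `(0,0,c)` of the constraint are nonzero multiples of `σ c 1`.
  have h0 := h 0 0 0
  have h1 := h 0 0 1
  have h2 := h 0 0 2
  simp [egorovV, Fin.sum_univ_three] at h0 h1 h2
  have h01 : σ 0 1 = 0 := by linarith
  have h21 : σ 2 1 = 0 := by linarith
  refine ⟨h01, h1, (hσ 1 2).trans h21, ?_⟩
  -- The middle column of `σ` vanishes.
  refine Matrix.det_eq_zero_of_column_eq_zero 1 fun i => ?_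
  fin_cases i
  exacts [h01, h1, h21]
end
end

section
/- Let s, t : ℝ with (s, t) ≠ (0, 0), and let V : Fin 3 → Fin 3 → Fin 3 → ℝ be the tensor with V 0 0 2 = −s, V 0 1 2 = t, V 1 0 2 = t, V 1 1 2 = s, and all other components zero (the projective Weyl tensor of a non-flat Newtonian projective structure with s = ∂₁∂₂f and t = (1/2)((∂₁)² − (∂₂)²)f at a point). Suppose σ : Matrix (Fin 3) (Fin 3) ℝ is symmetric and satisfies: for all a, b, c, ∑_d (V a b d * σ c d + V b c d * σ a d + V c a d * σ b d) = 0 (tensorially V^{(ab}{}_d σ^{c)d} = 0). Then σ a 2 = 0 for all a, and consequently det σ = 0. (Hence every solution of the metrisability equation for a non-flat Newtonian structure is degenerate, so these projective structures are not metrisable.) -/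
/-!
Only the components `V^{ab}{}_2` with `a, b ∈ {0, 1}` are nonzero, so the constraint involves `σ`
only through its last column `σ^{a2}`. Its components `000`, `111`, `002` say that `s` annihilates
`σ⁰²`, `σ¹²`, `σ²²`; given this, the components `001`, `011`, `012` say that `t` annihilates them too.
As `s` and `t` are not both zero, the last column vanishes, and so does the determinant.
-/

noncomputable section

open Finset

/-- The projective Weyl tensor of a Newtonian structure with parameters `s`, `t`. -/
def newtonV (s t : ℝ) : Fin 3 → Fin 3 → Fin 3 → ℝ := fun a b c =>
  if c = 2 then
    if a = 0 ∧ b = 0 then -s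
    else if (a = 0 ∧ b = 1) ∨ (a = 1 ∧ b = 0) then t
    else if a = 1 ∧ b = 1 then s
    else 0
  else 0

/-- Every symmetric solution of the algebraic metrisability constraint for a non-flat
Newtonian structure has `σ a 2 = 0` for all `a` and is therefore degenerate. -/
theorem statement17 (s t : ℝ) (hst : (s, t) ≠ (0, 0))
    (σ : Matrix (Fin 3) (Fin 3) ℝ) (hσ : ∀ i j, σ i j = σ j i)
    (h : ∀ a b c, ∑ d,
      (newtonV s t a b d * σ c d + newtonV s t b c d * σ a d + newtonV s t c a d * σ b d) = 0) :
    (∀ a, σ a 2 = 0) ∧ σ.det = 0 := by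
  -- Up to sign and factor 3, in this order: `s σ⁰² = 0`, `2t σ⁰² = s σ¹²`, `s σ⁰² + 2t σ¹² = 0`,
  -- `s σ¹² = 0`, `s σ²² = 0`, `t σ²² = 0`.
  have h000 := h 0 0 0
  have h001 := h 0 0 1
  have h011 := h 0 1 1
  have h111 := h 1 1 1
  have h002 := h 0 0 2
  have h012 := h 0 1 2
  simp [newtonV, Fin.sum_univ_three] at h000 h001 h011 h111 h002 h012
  -- Non-flatness is used in the form: a real number annihilated by `s` and by `t` vanishes.
  have key : ∀ x : ℝ, s * x = 0 → t * x = 0 → x = 0 := by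
    intro x hs ht
    by_contra hx
    exact hst (Prod.ext ((mul_eq_zero.mp hs).resolve_right hx)
      ((mul_eq_zero.mp ht).resolve_right hx))
  have hcol : ∀ a, σ a 2 = 0 := by
    have h0 : σ 0 2 = 0 := by grind
    have h1 : σ 1 2 = 0 := by grind
    have h2 : σ 2 2 = 0 := by grind
    intro a
    fin_cases a
    exacts [h0, h1, h2]
  exact ⟨hcol, Matrix.det_eq_zero_of_column_eq_zero 2 hcol⟩
end
end

section
/- For f : Fin 3 → ℝ, define Qf a b c := f a * (∑_d ε b d c * f d) + f b * (∑_d ε a d c * f d). Then Qf a b c = 0 for all a, b, c if and only if f = 0. (This is the computational core of the theorem that an Einstein–Weyl projective structure in 3 dimensions is metrisable if and only if its Faraday form vanishes: when the Einstein–Weyl equations hold, the quadratic metrisability obstruction Q_{ab}{}^c reduces to f_{(a}ε_{b)d}{}^c f^d, where the Faraday form is F_{ab} = ε_{abc}f^c.) -/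
noncomputable section

open Finset

/-- The reduced quadratic obstruction `f_{(a}ε_{b)d}{}^c f^d` of an Einstein–Weyl structure
with Faraday form `F_{ab} = ε_{abc}f^c`. -/
def Qfaraday (f : Fin 3 → ℝ) (a b c : Fin 3) : ℝ :=
  f a * (∑ d, eps b d c * f d) + f b * (∑ d, eps a d c * f d)

/-- `Qfaraday f` vanishes identically if and only if `f = 0`. -/
theorem statement18 (f : Fin 3 → ℝ) :
    (∀ a b c, Qfaraday f a b c = 0) ↔ f = 0 := by
  constructor
  · intro h
    -- With these indices the components read `2 f₀ f₁`, `f₁² - f₀²` and `f₂² - f₁²`; the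
    -- first two force `f₀ = f₁ = 0` over `ℝ`, and the third then gives `f₂ = 0`.
    have h1 := h 0 0 2
    have h2 := h 0 1 2
    have h3 := h 1 2 0
    simp [Qfaraday, eps] at h1 h2 h3
    have e0 : f 0 = 0 := by rcases h1 with h1 | h1 <;> simp_all
    have e1 : f 1 = 0 := by simp_all
    have e2 : f 2 = 0 := by simp_all
    funext i
    fin_cases i <;> simp [e0, e1, e2]
  · rintro rfl a b c
    simp [Qfaraday]
end
end

section
/- Let U ⊆ ℝ³ be open. Let Γ : U → Fin 3 → Fin 3 → Fin 3 → ℝ (written Γ x a b c, representing the Christoffel symbols Γ_{ab}{}^c) be smooth with Γ x a b c = Γ x b a c (torsion-free) and ∑_b Γ x a b b = 0 for all x ∈ U, a (a special connection). Let σ : U → Matrix (Fin 3) (Fin 3) ℝ and μ : U → (Fin 3 → ℝ) be smooth, with σ x symmetric for all x, and suppose the metrisability equation holds: for all x ∈ U and all a, b, c, ∂_a (σ b c)(x) + ∑_d (Γ x a d b * σ x d c + Γ x a d c * σ x b d) = (if a = b then μ x c else 0) + (if a = c then μ x b else 0), where ∂_a is the partial derivative in the a-th coordinate direction. Define the curvature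 R x a b c d := ∂_a (fun y => Γ y b d c)(x) − ∂_b (fun y => Γ y a d c)(x) + ∑_e (Γ x a e c * Γ x b d e − Γ x b e c * Γ x a d e) (representing R_{ab}{}^c{}_d), the Schouten tensor P x b d := (1/2) ∑_a R x a b a d, and the projective Weyl tensor W x a b c d := R x a b c d − (if a = c then P x b d else 0) + (if b = c then P x a d else 0). Then for all x ∈ U and all a, b, c, d: ∑_e (W x a b c e * σ x d e + W x a b d e * σ x c e) + (1/3) * ∑_{e,f} ( (if a = c then W x b e d f else 0) − (if b = c then W x a e d f else 0) + (if a = d then W x b e c f else 0) − (if b = d then W x a e c f else 0) ) * σ x e f = 0. (This is the curvature constraint W_{ab}{}^c{}_eσ^{de} + W_{ab}{}^d{}_eσ^{ce} + (2/3)δ_{[a}{}^cW_{b]e}{}^d{}_fσ^{ef} + (2/3)δ_{[a}{}^dW_{b]e}{}^c{}_fσ^{ef} = 0 satisfied by any solution of the metrisability equation.) -/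
/-!
Write `D_a = ∂_a + Γ_a` acting on upper indices only. The metrisability equation says
`D_b σ^{cd} = δ_b^c μ^d + δ_b^d μ^c`. Differentiating once more, and using the symmetry of second
partial derivatives of `σ` together with torsion-freeness (which removes the terms `Γ_{ab}^c μ^d`),
the commutator `[D_a, D_b] σ` gives `curv_sigma`:
`R_{ab}^c_e σ^{ed} + R_{ab}^d_e σ^{ce} = δ_b^c D_a μ^d + δ_b^d D_a μ^c - (a ↔ b)`.
Replacing `R` by the Weyl tensor turns `D_a μ^d` into `T_a^d = D_a μ^d + P_{ae} σ^{ed}`. Since `W` is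
trace-free, contracting `b` with `c` determines `T_a^d` as `(1/3) W_{ae}^d_f σ^{ef}` up to a multiple
of `δ_a^d`, and that multiple cancels in the antisymmetrised right-hand side (`constraint_of_trace`).
-/

noncomputable section

open Finset

/-- Partial derivative in the `a`-th coordinate direction of a function on `ℝ³`. -/
def pd (a : Fin 3) (g : (Fin 3 → ℝ) → ℝ) (x : Fin 3 → ℝ) : ℝ :=
  fderiv ℝ g x (Pi.single a 1)

/-- The curvature `R_{ab}{}^c{}_d` of the connection with Christoffel symbols `Γ`. -/
def curv (Γ : (Fin 3 → ℝ) → Fin 3 → Fin 3 → Fin 3 → ℝ)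
    (x : Fin 3 → ℝ) (a b c d : Fin 3) : ℝ :=
  pd a (fun y => Γ y b d c) x - pd b (fun y => Γ y a d c) x
    + ∑ e, (Γ x a e c * Γ x b d e - Γ x b e c * Γ x a d e)

/-- The projective Schouten tensor `P_{bd} = (1/2) R_{ab}{}^a{}_d` of a special connection. -/
def schouten (Γ : (Fin 3 → ℝ) → Fin 3 → Fin 3 → Fin 3 → ℝ)
    (x : Fin 3 → ℝ) (b d : Fin 3) : ℝ :=
  (1 / 2) * ∑ a, curv Γ x a b a d

/-- The projective Weyl tensor
`W_{ab}{}^c{}_d = R_{ab}{}^c{}_d − δ_a{}^c P_{bd} + δ_b{}^c P_{ad}`. -/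
def weyl (Γ : (Fin 3 → ℝ) → Fin 3 → Fin 3 → Fin 3 → ℝ)
    (x : Fin 3 → ℝ) (a b c d : Fin 3) : ℝ :=
  curv Γ x a b c d - (if a = c then schouten Γ x b d else 0)
    + (if b = c then schouten Γ x a d else 0)

/-- Kronecker delta on `Fin 3`. -/
def kd (a b : Fin 3) : ℝ := if a = b then 1 else 0

theorem kd_mul_eq (a b : Fin 3) (r : ℝ) : (if a = b then r else 0) = kd a b * r := by
  simp [kd]

theorem pd_congr {U : Set (Fin 3 → ℝ)} (hU : IsOpen U) {f g : (Fin 3 → ℝ) → ℝ}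
    (h : ∀ y ∈ U, f y = g y) {x : Fin 3 → ℝ} (hx : x ∈ U) (a : Fin 3) :
    pd a f x = pd a g x := by
  have : f =ᶠ[nhds x] g := by
    filter_upwards [hU.mem_nhds hx] with y hy using h y hy
  simp [pd, this.fderiv_eq]

theorem pd_comm {U : Set (Fin 3 → ℝ)} (hU : IsOpen U) {f : (Fin 3 → ℝ) → ℝ}
    (hf : ContDiffOn ℝ (⊤ : ℕ∞) f U) {x : Fin 3 → ℝ} (hx : x ∈ U) (a b : Fin 3) :
    pd a (pd b f) x = pd b (pd a f) x := by
  have hc : ContDiffAt ℝ (⊤ : ℕ∞) f x := hf.contDiffAt (hU.mem_nhds hx)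
  have hs : IsSymmSndFDerivAt ℝ f x :=
    hc.isSymmSndFDerivAt (by
      rw [minSmoothness_of_isRCLikeNormedField]
      exact WithTop.coe_le_coe.2 (le_top : (2 : ℕ∞) ≤ ⊤))
  have hd : DifferentiableAt ℝ (fderiv ℝ f) x :=
    (hc.fderiv_right (m := 1) (by norm_cast)).differentiableAt (by simp)
  have key : ∀ a b : Fin 3,
      pd a (pd b f) x = fderiv ℝ (fderiv ℝ f) x (Pi.single a 1) (Pi.single b 1) := by
    intro a b
    have h := hd.hasFDerivAt.clm_apply (hasFDerivAt_const (Pi.single b (1 : ℝ)) x)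
    have h2 : fderiv ℝ (pd b f) x = _ := h.fderiv
    simp [pd] at h2 ⊢
    simp [h2]
  rw [key, key]
  exact hs _ _

/-- The derivative of the metrisability equation, solved for the second derivatives of `σ`. -/
theorem pd_pd_sigma {U : Set (Fin 3 → ℝ)} (hU : IsOpen U)
    {Γ : (Fin 3 → ℝ) → Fin 3 → Fin 3 → Fin 3 → ℝ}
    {σ : (Fin 3 → ℝ) → Matrix (Fin 3) (Fin 3) ℝ} {μ : (Fin 3 → ℝ) → Fin 3 → ℝ}
    (hΓsmooth : ∀ a b c, ContDiffOn ℝ (⊤ : ℕ∞) (fun x => Γ x a b c) U)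
    (hσsmooth : ∀ b c, ContDiffOn ℝ (⊤ : ℕ∞) (fun x => σ x b c) U)
    (hμsmooth : ∀ c, ContDiffOn ℝ (⊤ : ℕ∞) (fun x => μ x c) U)
    (hmet : ∀ x ∈ U, ∀ a b c,
      pd a (fun y => σ y b c) x = kd a b * μ x c + kd a c * μ x b
        - ∑ d, (Γ x a d b * σ x d c + Γ x a d c * σ x b d))
    {x : Fin 3 → ℝ} (hx : x ∈ U) (a b c d : Fin 3) :
    pd a (pd b (fun y => σ y c d)) x
      = kd b c * pd a (fun y => μ y d) x + kd b d * pd a (fun y => μ y c) x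
        - ∑ e, (pd a (fun y => Γ y b e c) x * σ x e d + Γ x b e c * pd a (fun y => σ y e d) x
          + (pd a (fun y => Γ y b e d) x * σ x c e + Γ x b e d * pd a (fun y => σ y c e) x)) := by
  rw [pd_congr hU (fun y hy => hmet y hy b c d) hx a]
  have diff : ∀ {f : (Fin 3 → ℝ) → ℝ}, ContDiffOn ℝ (⊤ : ℕ∞) f U →
      HasFDerivAt f (fderiv ℝ f x) x := fun hf =>
    ((hf.contDiffAt (hU.mem_nhds hx)).differentiableAt (by simp)).hasFDerivAt
  have h := (((diff (hμsmooth d)).const_mul (kd b c)).add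
    ((diff (hμsmooth c)).const_mul (kd b d))).sub
    (HasFDerivAt.fun_sum (u := univ) fun e _ =>
      ((diff (hΓsmooth b e c)).mul (diff (hσsmooth e d))).add
      ((diff (hΓsmooth b e d)).mul (diff (hσsmooth c e))))
  have h2 : fderiv ℝ (fun y => kd b c * μ y d + kd b d * μ y c
        - ∑ e, (Γ y b e c * σ y e d + Γ y b e d * σ y c e)) x = _ := h.fderiv
  unfold pd
  rw [h2]
  simp only [Fin.sum_univ_three, sub_apply, add_apply,
    smul_apply, smul_eq_mul]
  ring

theorem sum_kd_mul (a : Fin 3) (f : Fin 3 → ℝ) : ∑ e, kd a e * f e = f a := by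
  simp [kd]

/-- The commutator `[D_a, D_b]` applied to `σ`, where `D_a = ∂_a + Γ_a` acts on upper indices. -/
theorem curv_sigma {U : Set (Fin 3 → ℝ)} (hU : IsOpen U)
    {Γ : (Fin 3 → ℝ) → Fin 3 → Fin 3 → Fin 3 → ℝ}
    {σ : (Fin 3 → ℝ) → Matrix (Fin 3) (Fin 3) ℝ} {μ : (Fin 3 → ℝ) → Fin 3 → ℝ}
    (hΓsmooth : ∀ a b c, ContDiffOn ℝ (⊤ : ℕ∞) (fun x => Γ x a b c) U)
    (hΓsym : ∀ x ∈ U, ∀ a b c, Γ x a b c = Γ x b a c)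
    (hσsmooth : ∀ b c, ContDiffOn ℝ (⊤ : ℕ∞) (fun x => σ x b c) U)
    (hμsmooth : ∀ c, ContDiffOn ℝ (⊤ : ℕ∞) (fun x => μ x c) U)
    (hmet : ∀ x ∈ U, ∀ a b c,
      pd a (fun y => σ y b c) x = kd a b * μ x c + kd a c * μ x b
        - ∑ d, (Γ x a d b * σ x d c + Γ x a d c * σ x b d))
    {x : Fin 3 → ℝ} (hx : x ∈ U) {N : Fin 3 → Fin 3 → ℝ}
    (hN : ∀ a d, N a d = pd a (fun y => μ y d) x + ∑ e, Γ x a e d * μ x e) (a b c d : Fin 3) :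
    ∑ e, (curv Γ x a b c e * σ x e d + curv Γ x a b d e * σ x c e)
      = kd b c * N a d + kd b d * N a c - kd a c * N b d - kd a d * N b c := by
  have h := pd_comm hU (hσsmooth c d) hx a b
  rw [pd_pd_sigma hU hΓsmooth hσsmooth hμsmooth hmet hx,
    pd_pd_sigma hU hΓsmooth hσsmooth hμsmooth hmet hx] at h
  simp only [hmet x hx] at h
  have s1 := sum_kd_mul a (fun e => Γ x b e c)
  have s2 := sum_kd_mul b (fun e => Γ x a e c)
  have s3 := sum_kd_mul a (fun e => Γ x b e d)
  have s4 := sum_kd_mul b (fun e => Γ x a e d)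
  have t1 := hΓsym x hx a b c
  have t2 := hΓsym x hx a b d
  simp only [hN, curv, Fin.sum_univ_three] at h s1 s2 s3 s4 ⊢
  linear_combination -h + μ x d * (s2 - s1 + t1) + μ x c * (s4 - s3 + t2)

/-- The trace part of the argument: an equation `W·σ = δ T` (suitably antisymmetrised) with
`W` trace-free on `b, c` determines `T` modulo a multiple of `δ`, which drops out. -/
theorem constraint_of_trace {W : Fin 3 → Fin 3 → Fin 3 → Fin 3 → ℝ} {s : Fin 3 → Fin 3 → ℝ}
    {T : Fin 3 → Fin 3 → ℝ} (hW : ∀ a e, ∑ b, W a b b e = 0)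
    (hT : ∀ a b c d, ∑ e, (W a b c e * s d e + W a b d e * s c e)
      = kd b c * T a d + kd b d * T a c - kd a c * T b d - kd a d * T b c) (a b c d : Fin 3) :
    (∑ e, (W a b c e * s d e + W a b d e * s c e))
      + (1 / 3) * ∑ e, ∑ f, (kd a c * W b e d f - kd b c * W a e d f
        + kd a d * W b e c f - kd b d * W a e c f) * s e f = 0 := by
  have hV : ∀ a d, ∑ e, ∑ f, W a e d f * s e f = 3 * T a d - kd a d * ∑ e, T e e := by
    intro a d
    have h : ∑ b, ∑ e, (W a b b e * s d e + W a b d e * s b e)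
        = ∑ b, (kd b b * T a d + kd b d * T a b - kd a b * T b d - kd a d * T b b) :=
      Finset.sum_congr rfl fun b _ => hT a b b d
    have k1 : ∀ b, kd b b = 1 := fun b => by simp [kd]
    have s1 : ∑ b, kd b d * T a b = T a d := by simp [kd]
    have s2 := sum_kd_mul a (fun b => T b d)
    have w0 := hW a 0
    have w1 := hW a 1
    have w2 := hW a 2
    simp only [k1, Fin.sum_univ_three] at h s1 s2 w0 w1 w2 ⊢
    linear_combination h + s1 - s2 - s d 0 * w0 - s d 1 * w1 - s d 2 * w2
  have v1 := hV b d
  have v2 := hV a d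
  have v3 := hV b c
  have v4 := hV a c
  rw [hT]
  simp only [Fin.sum_univ_three] at v1 v2 v3 v4 ⊢
  linear_combination (1 / 3) * (kd a c * v1 - kd b c * v2 + kd a d * v3 - kd b d * v4)

theorem curv_antisymm (Γ : (Fin 3 → ℝ) → Fin 3 → Fin 3 → Fin 3 → ℝ) (x : Fin 3 → ℝ)
    (a b c d : Fin 3) : curv Γ x a b c d = -curv Γ x b a c d := by
  simp only [curv, Fin.sum_univ_three]
  ring

theorem weyl_eq (Γ : (Fin 3 → ℝ) → Fin 3 → Fin 3 → Fin 3 → ℝ) (x : Fin 3 → ℝ)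
    (a b c d : Fin 3) : weyl Γ x a b c d
      = curv Γ x a b c d - kd a c * schouten Γ x b d + kd b c * schouten Γ x a d := by
  simp only [weyl, kd_mul_eq]

theorem weyl_trace (Γ : (Fin 3 → ℝ) → Fin 3 → Fin 3 → Fin 3 → ℝ) (x : Fin 3 → ℝ)
    (a e : Fin 3) : ∑ b, weyl Γ x a b b e = 0 := by
  have hP : schouten Γ x a e = (1 / 2) * ∑ b, curv Γ x b a b e := rfl
  have s1 := sum_kd_mul a (fun b => schouten Γ x b e)
  have k1 : ∀ b, kd b b = 1 := fun b => by simp [kd]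
  have ha := fun b => curv_antisymm Γ x a b b e
  simp only [weyl_eq, k1, ha, Fin.sum_univ_three] at hP s1 ⊢
  linear_combination 2 * hP - s1

/-- Any smooth solution `σ` of the metrisability equation of a special torsion-free
connection on an open set `U ⊆ ℝ³` satisfies the algebraic curvature constraint
`W_{ab}{}^c{}_eσ^{de} + W_{ab}{}^d{}_eσ^{ce} + (2/3)δ_{[a}{}^cW_{b]e}{}^d{}_fσ^{ef}
+ (2/3)δ_{[a}{}^dW_{b]e}{}^c{}_fσ^{ef} = 0`. -/
theorem statement19 (U : Set (Fin 3 → ℝ)) (hU : IsOpen U)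
    (Γ : (Fin 3 → ℝ) → Fin 3 → Fin 3 → Fin 3 → ℝ)
    (σ : (Fin 3 → ℝ) → Matrix (Fin 3) (Fin 3) ℝ)
    (μ : (Fin 3 → ℝ) → Fin 3 → ℝ)
    (hΓsmooth : ∀ a b c, ContDiffOn ℝ (⊤ : ℕ∞) (fun x => Γ x a b c) U)
    (hΓsym : ∀ x ∈ U, ∀ a b c, Γ x a b c = Γ x b a c)
    (hΓtrace : ∀ x ∈ U, ∀ a, ∑ b, Γ x a b b = 0)
    (hσsmooth : ∀ b c, ContDiffOn ℝ (⊤ : ℕ∞) (fun x => σ x b c) U)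
    (hσsym : ∀ x ∈ U, ∀ i j, σ x i j = σ x j i)
    (hμsmooth : ∀ c, ContDiffOn ℝ (⊤ : ℕ∞) (fun x => μ x c) U)
    (hmet : ∀ x ∈ U, ∀ a b c,
      pd a (fun y => σ y b c) x + ∑ d, (Γ x a d b * σ x d c + Γ x a d c * σ x b d)
        = (if a = b then μ x c else 0) + (if a = c then μ x b else 0)) :
    ∀ x ∈ U, ∀ a b c d,
      (∑ e, (weyl Γ x a b c e * σ x d e + weyl Γ x a b d e * σ x c e))
        + (1 / 3) * ∑ e, ∑ f,
            ((if a = c then weyl Γ x b e d f else 0)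
              - (if b = c then weyl Γ x a e d f else 0)
              + (if a = d then weyl Γ x b e c f else 0)
              - (if b = d then weyl Γ x a e c f else 0)) * σ x e f
        = 0 := by
  intro x hx
  have hmet' : ∀ x ∈ U, ∀ a b c,
      pd a (fun y => σ y b c) x = kd a b * μ x c + kd a c * μ x b
        - ∑ d, (Γ x a d b * σ x d c + Γ x a d c * σ x b d) := by
    intro y hy a b c
    have := hmet y hy a b c
    rw [kd_mul_eq, kd_mul_eq] at this
    linarith
  have hR := curv_sigma hU hΓsmooth hΓsym hσsmooth hμsmooth hmet' hx (fun _ _ => rfl)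
  simp only [kd_mul_eq]
  refine constraint_of_trace (s := σ x)
    (T := fun a d => (pd a (fun y => μ y d) x + ∑ e, Γ x a e d * μ x e)
      + ∑ e, schouten Γ x a e * σ x d e) (weyl_trace Γ x) ?_
  intro a b c d
  have h := hR a b c d
  have hs := fun e => hσsym x hx e d
  simp only [weyl_eq, hs, Fin.sum_univ_three] at h ⊢
  linear_combination h
end
end
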